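/- If the Poisson bivector Π of a Poisson vector space (V, Π, W, ⟨·,·⟩) is weakly non-degenerate as a bilinear form on W, then the associated CCR algebra A(V,Π,W,⟨·,·⟩) is simple: its only two-sided ideals are {0} and the whole algebra. -/

import Mathlib

universe u

/-- The CCR relations for a map `A : W → B` into a unital complex `*`-algebra, relative to a
bilinear antisymmetric form `Pb` on `W`: real linearity, hermiticity, and the canonical
commutation relations `[A x, A y] = i Pb(x,y) 𝟙`. -/
def CCRRel {W : Type*} [AddCommGroup W] [Module ℝ W] (Pb : W →ₗ[ℝ] W →ₗ[ℝ] ℝ)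
    {B : Type*} [Ring B] [Algebra ℂ B] [StarRing B] [StarModule ℂ B] (A : W → B) : Prop :=
  (∀ (a b : ℝ) (x y : W), A (a • x + b • y) = (a : ℂ) • A x + (b : ℂ) • A y) ∧
  (∀ x : W, star (A x) = A x) ∧
  (∀ x y : W, A x * A y - A y * A x = algebraMap ℂ B (Complex.I * (Pb x y : ℂ)))

/-- `𝒜` together with the generators `A : W → 𝒜` is *the* CCR algebra of `(W, Pb)`:
the generators satisfy the CCR relations, and the pair `(𝒜, A)` has the universal property
of the unital `*`-algebra presented by these generators and relations. -/
def IsCCRAlgebra {W : Type*} [AddCommGroup W] [Module ℝ W] (Pb : W →ₗ[ℝ] W →ₗ[ℝ] ℝ)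
    (𝒜 : Type u) [Ring 𝒜] [Algebra ℂ 𝒜] [StarRing 𝒜] [StarModule ℂ 𝒜] (A : W → 𝒜) : Prop :=
  CCRRel Pb A ∧
  ∀ (B : Type u) [Ring B] [Algebra ℂ B] [StarRing B] [StarModule ℂ B],
    ∀ A' : W → B, CCRRel Pb A' → ∃! h : 𝒜 →⋆ₐ[ℂ] B, ∀ x, h (A x) = A' x

/-!
Suppose `[f, e] = 1`, that `f` commutes with a subalgebra `B` and that `[e, B] ⊆ B`. Every element
of the algebra generated by `B` and `e` has the form `∑ j ≤ n, bⱼ eʲ` with `bⱼ ∈ B`, and `[f, ·]`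
differentiates this expression with respect to `e`. Bracketing with `f` exactly `n` times turns it
into `n! bₙ`, so an ideal which meets `B` only in `0` does not contain it unless it is zero.

Any element of the CCR algebra involves finitely many generators. Adjoin these one at a time: if
`y` is not in the span of the earlier ones, weak non-degeneracy provides an `x` with `Π(x, y) = 1`
that annihilates them, and a multiple of `A(x)` serves as `f` for `e = A(y)`. Hence a proper ideal,
which meets the scalars only in `0`, is zero.
-/

open Polynomial

section Ideal

variable {K R : Type*} [Field K] [Ring R] [Algebra K R] {I : TwoSidedIdeal R}

lemma mem_of_smul_mem {c : K} (hc : c ≠ 0) {x : R} (h : c • x ∈ I) : x ∈ I := by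
  have := I.mul_mem_left (algebraMap K R c⁻¹) _ h
  rwa [← Algebra.smul_def, inv_smul_smul₀ hc] at this

lemma eq_zero_of_mem_bot_of_mem (hI : (1 : R) ∉ I) {a : R} (ha : a ∈ (⊥ : Subalgebra K R))
    (haI : a ∈ I) : a = 0 := by
  obtain ⟨c, rfl⟩ := Algebra.mem_bot.1 ha
  by_contra hc
  refine hI (mem_of_smul_mem (K := K) (c := c) ?_ ?_)
  · rintro rfl
    exact hc (map_zero _)
  · rwa [← Algebra.algebraMap_eq_smul_one]

end Ideal

section OneVariable

variable {R S : Type*} [Ring R] [Semiring S] {φ : S →+* R} {e f : R}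

lemma lie_pow_of_lie_eq_one (hfe : ⁅f, e⁆ = 1) (n : ℕ) : ⁅f, e ^ n⁆ = n • e ^ (n - 1) := by
  rw [Ring.lie_def, sub_eq_iff_eq_add] at hfe ⊢
  induction n with
  | zero => simp
  | succ n ih =>
    have hn : n • e ^ (n - 1) * e = n • e ^ n := by
      cases n with
      | zero => simp
      | succ n => rw [smul_mul_assoc, Nat.add_sub_cancel, ← pow_succ]
    rw [pow_succ, ← mul_assoc, ih, add_mul, mul_assoc, hfe, hn, Nat.add_sub_cancel, succ_nsmul,
      mul_add, mul_one, ← mul_assoc, add_assoc]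

lemma lie_eval₂_eq_eval₂_derivative (hfe : ⁅f, e⁆ = 1) (hf : ∀ b, Commute f (φ b)) (p : S[X]) :
    ⁅f, p.eval₂ φ e⁆ = (derivative p).eval₂ φ e := by
  induction p using Polynomial.induction_on' with
  | add p q hp hq =>
    rw [eval₂_add, derivative_add, eval₂_add, ← hp, ← hq]
    simp only [Ring.lie_def]
    noncomm_ring
  | monomial n b =>
    calc ⁅f, (monomial n b).eval₂ φ e⁆ = φ b * ⁅f, e ^ n⁆ := by
          rw [eval₂_monomial, Ring.lie_def, Ring.lie_def, ← mul_assoc, (hf b).eq]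
          noncomm_ring
      _ = (derivative (monomial n b)).eval₂ φ e := by
          rw [lie_pow_of_lie_eq_one hfe, derivative_monomial, eval₂_monomial, map_mul, map_natCast,
            nsmul_eq_mul, mul_assoc]

variable {I : TwoSidedIdeal R}

lemma eval₂_iterate_derivative_mem (hfe : ⁅f, e⁆ = 1) (hf : ∀ b, Commute f (φ b)) {p : S[X]}
    (hp : p.eval₂ φ e ∈ I) (k : ℕ) : (derivative^[k] p).eval₂ φ e ∈ I := by
  induction k with
  | zero => exact hp
  | succ k ih =>
    rw [Function.iterate_succ_apply', ← lie_eval₂_eq_eval₂_derivative hfe hf, Ring.lie_def]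
    exact I.sub_mem (I.mul_mem_left _ _ ih) (I.mul_mem_right _ _ ih)

lemma leadingCoeff_mem_of_eval₂_mem (K : Type*) [Field K] [CharZero K] [Algebra K R]
    (hfe : ⁅f, e⁆ = 1) (hf : ∀ b, Commute f (φ b)) {p : S[X]} (hp : p.eval₂ φ e ∈ I) :
    φ p.leadingCoeff ∈ I := by
  set n := p.natDegree
  have hconst : derivative^[n] p = C (n.factorial • p.leadingCoeff) := by
    have hdeg : (derivative^[n] p).natDegree = 0 := by
      have := natDegree_iterate_derivative p n
      omega
    rw [eq_C_of_natDegree_eq_zero hdeg, coeff_iterate_derivative, zero_add,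
      Nat.descFactorial_self, leadingCoeff]
  have hmem := eval₂_iterate_derivative_mem hfe hf hp n
  rw [hconst, eval₂_C, map_nsmul, ← Nat.cast_smul_eq_nsmul K] at hmem
  exact mem_of_smul_mem (Nat.cast_ne_zero.2 n.factorial_ne_zero) hmem

end OneVariable

lemma exists_finset_mem_adjoin_image {K R ι : Type*} [CommSemiring K] [Semiring R] [Algebra K R]
    {g : ι → R} {a : R} (ha : a ∈ Algebra.adjoin K (Set.range g)) :
    ∃ s : Finset ι, a ∈ Algebra.adjoin K (g '' s) := by
  classical
  have mono {s t : Finset ι} (hst : s ⊆ t) :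
      Algebra.adjoin K (g '' s) ≤ Algebra.adjoin K (g '' t) :=
    Algebra.adjoin_mono (Set.image_mono (Finset.coe_subset.2 hst))
  induction ha using Algebra.adjoin_induction with
  | mem _ hx =>
    obtain ⟨i, rfl⟩ := hx
    exact ⟨{i}, Algebra.subset_adjoin ⟨i, by simp, rfl⟩⟩
  | algebraMap c => exact ⟨∅, algebraMap_mem _ c⟩
  | add x y _ _ hx hy =>
    obtain ⟨s, hs⟩ := hx
    obtain ⟨t, ht⟩ := hy
    exact ⟨s ∪ t, add_mem (mono Finset.subset_union_left hs) (mono Finset.subset_union_right ht)⟩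
  | mul x y _ _ hx hy =>
    obtain ⟨s, hs⟩ := hx
    obtain ⟨t, ht⟩ := hy
    exact ⟨s ∪ t, mul_mem (mono Finset.subset_union_left hs) (mono Finset.subset_union_right ht)⟩

section Adjoin

variable {K R : Type*} [CommRing K] [Ring R] [Algebra K R] {e : R}

lemma lie_mem_adjoin {T : Set R} {b : R}
    (hT : ∀ t ∈ T, ⁅e, t⁆ ∈ Algebra.adjoin K T) (hb : b ∈ Algebra.adjoin K T) :
    ⁅e, b⁆ ∈ Algebra.adjoin K T := by
  induction hb using Algebra.adjoin_induction with
  | mem t ht => exact hT t ht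
  | algebraMap c =>
    rw [Ring.lie_def, Algebra.commutes, sub_self]
    exact zero_mem _
  | add x y _ _ hx hy =>
    have : ⁅e, x + y⁆ = ⁅e, x⁆ + ⁅e, y⁆ := by simp only [Ring.lie_def]; noncomm_ring
    exact this ▸ add_mem hx hy
  | mul x y hx hy hex hey =>
    have : ⁅e, x * y⁆ = ⁅e, x⁆ * y + x * ⁅e, y⁆ := by simp only [Ring.lie_def]; noncomm_ring
    exact this ▸ add_mem (mul_mem hex hy) (mul_mem hx hey)

lemma exists_eval₂_eq_mul_eval₂ {B : Subalgebra K R}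
    (he : ∀ b ∈ B, ⁅e, b⁆ ∈ B) (p : B[X]) :
    ∃ q : B[X], q.eval₂ (B.val : B →+* R) e = e * p.eval₂ (B.val : B →+* R) e := by
  induction p using Polynomial.induction_on' with
  | add p q hp hq =>
    obtain ⟨p', hp'⟩ := hp
    obtain ⟨q', hq'⟩ := hq
    exact ⟨p' + q', by rw [eval₂_add, eval₂_add, hp', hq', mul_add]⟩
  | monomial n b =>
    refine ⟨monomial (n + 1) b + monomial n ⟨⁅e, (b : R)⁆, he b b.2⟩, ?_⟩
    simp only [eval₂_add, eval₂_monomial, RingHom.coe_coe, Subalgebra.coe_val, Ring.lie_def,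
      pow_succ']
    noncomm_ring

lemma exists_eval₂_eq_of_mem_adjoin_insert {B : Subalgebra K R}
    (he : ∀ b ∈ B, ⁅e, b⁆ ∈ B) {a : R} (ha : a ∈ Algebra.adjoin K (insert e (B : Set R))) :
    ∃ p : B[X], p.eval₂ (B.val : B →+* R) e = a := by
  suffices h : ∀ p : B[X], ∃ q : B[X],
      q.eval₂ (B.val : B →+* R) e = a * p.eval₂ (B.val : B →+* R) e by
    simpa using h 1
  have eval₂_C_mul (b : B) (p : B[X]) :
      (C b * p).eval₂ (B.val : B →+* R) e = b * p.eval₂ (B.val : B →+* R) e := by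
    rw [← smul_eq_C_mul, eval₂_smul]
    rfl
  induction ha using Algebra.adjoin_induction with
  | mem x hx =>
    intro p
    rcases hx with rfl | hx
    · exact exists_eval₂_eq_mul_eval₂ he p
    · exact ⟨C ⟨x, hx⟩ * p, eval₂_C_mul ⟨x, hx⟩ p⟩
  | algebraMap c => exact fun p => ⟨C (algebraMap K B c) * p, eval₂_C_mul (algebraMap K B c) p⟩
  | add x y _ _ hx hy =>
    intro p
    obtain ⟨q, hq⟩ := hx p
    obtain ⟨r, hr⟩ := hy p
    exact ⟨q + r, by rw [eval₂_add, hq, hr, add_mul]⟩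
  | mul x y _ _ hx hy =>
    intro p
    obtain ⟨q, hq⟩ := hy p
    obtain ⟨r, hr⟩ := hx q
    exact ⟨r, by rw [hr, hq, mul_assoc]⟩

end Adjoin

lemma eq_zero_of_mem_adjoin_insert_of_mem {K R : Type*} [Field K] [CharZero K] [Ring R]
    [Algebra K R] {B : Subalgebra K R} {e f : R} (hfe : ⁅f, e⁆ = 1) (hf : ∀ b ∈ B, Commute f b)
    (he : ∀ b ∈ B, ⁅e, b⁆ ∈ B) {I : TwoSidedIdeal R} (hBI : ∀ b ∈ B, b ∈ I → b = 0) {a : R}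
    (ha : a ∈ Algebra.adjoin K (insert e (B : Set R))) (haI : a ∈ I) : a = 0 := by
  obtain ⟨p, rfl⟩ := exists_eval₂_eq_of_mem_adjoin_insert he ha
  have hlead : (p.leadingCoeff : R) ∈ I :=
    leadingCoeff_mem_of_eval₂_mem K hfe (fun b : B => hf b b.2) haI
  have hp : p = 0 := leadingCoeff_eq_zero.1 (Subtype.ext (hBI _ p.leadingCoeff.2 hlead))
  rw [hp, eval₂_zero]

lemma exists_eq_one_and_forall_eq_zero {k V W : Type*} [Field k] [AddCommGroup V]
    [Module k V] [AddCommGroup W] [Module k W] {ω : V →ₗ[k] W →ₗ[k] k} (hω : ω.SeparatingRight)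
    {s : Finset W} {y : W} (hy : y ∉ Submodule.span k (s : Set W)) :
    ∃ x, ω x y = 1 ∧ ∀ z ∈ s, ω x z = 0 := by
  obtain ⟨x, hxs, hxy⟩ : ∃ x, (∀ z ∈ s, ω x z = 0) ∧ ω x y ≠ 0 := by
    by_contra! hker
    have hspan : ω.flip y ∈ Submodule.span k (Set.range fun z : s => ω.flip z) :=
      mem_span_of_iInf_ker_le_ker fun x hx => hker x (by simpa using hx)
    have hrange : (Set.range fun z : s => ω.flip z) = ω.flip '' s := by
      rw [Set.image_eq_range]
      rfl
    rw [hrange, Submodule.span_image] at hspan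
    have hinj := LinearMap.ker_eq_bot.1 (LinearMap.separatingRight_iff_flip_ker_eq_bot.1 hω)
    exact hy (by simpa [hinj.eq_iff] using hspan)
  refine ⟨(ω x y)⁻¹ • x, by simp [hxy], fun z hz => by simp [hxs z hz]⟩

section CanonicalCommutationRelations

variable {k K W R : Type*} [Field k] [Field K] [Algebra k K] [AddCommGroup W] [Module k W]
  [Ring R] [Algebra K R] [Module k R] {ω : W →ₗ[k] W →ₗ[k] k} {A : W →ₗ[k] R} {c : K}

lemma lie_smul_eq_algebraMap (hc : c ≠ 0)
    (hA : ∀ x y, ⁅A x, A y⁆ = algebraMap K R (c * algebraMap k K (ω x y))) (x y : W) :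
    ⁅c⁻¹ • A x, A y⁆ = algebraMap K R (algebraMap k K (ω x y)) := by
  rw [Ring.lie_def, smul_mul_assoc, mul_smul_comm, ← smul_sub, ← Ring.lie_def, hA,
    Algebra.smul_def, ← map_mul, inv_mul_cancel_left₀ hc]

lemma eq_zero_of_mem_adjoin_image_of_mem [CharZero K] [IsScalarTower k K R]
    (hω : ω.SeparatingRight) (hc : c ≠ 0)
    (hA : ∀ x y, ⁅A x, A y⁆ = algebraMap K R (c * algebraMap k K (ω x y)))
    {I : TwoSidedIdeal R} (hI : (1 : R) ∉ I) (s : Finset W) {a : R}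
    (ha : a ∈ Algebra.adjoin K (A '' s)) (haI : a ∈ I) : a = 0 := by
  classical
  induction s using Finset.induction_on generalizing a with
  | empty =>
    rw [Finset.coe_empty, Set.image_empty, Algebra.adjoin_empty] at ha
    exact eq_zero_of_mem_bot_of_mem hI ha haI
  | insert y s _ ih =>
    set B := Algebra.adjoin K (A '' s)
    have ha' : a ∈ Algebra.adjoin K (insert (A y) (B : Set R)) := by
      refine Algebra.adjoin_mono ?_ ha
      rw [Finset.coe_insert, Set.image_insert_eq]
      exact Set.insert_subset_insert Algebra.subset_adjoin
    by_cases hy : y ∈ Submodule.span k (s : Set W)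
    · have hAy : A y ∈ B :=
        Algebra.span_le_adjoin K _ <| Submodule.span_subset_span k K _ <| by
          rw [Submodule.span_image]
          exact Submodule.mem_map_of_mem hy
      rw [Set.insert_eq_of_mem hAy, Algebra.adjoin_eq] at ha'
      exact ih ha' haI
    · obtain ⟨x, hxy, hxs⟩ := exists_eq_one_and_forall_eq_zero hω hy
      have hfe : ⁅c⁻¹ • A x, A y⁆ = 1 := by
        rw [lie_smul_eq_algebraMap hc hA, hxy, map_one, map_one]
      have hf (b : R) (hb : b ∈ B) : Commute (c⁻¹ • A x) b := by
        refine Algebra.commute_of_mem_adjoin_of_forall_mem_commute hb ?_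
        rintro _ ⟨z, hz, rfl⟩
        rw [commute_iff_lie_eq, lie_smul_eq_algebraMap hc hA, hxs z hz, map_zero, map_zero]
      have he (b : R) (hb : b ∈ B) : ⁅A y, b⁆ ∈ B := by
        refine lie_mem_adjoin ?_ hb
        rintro _ ⟨z, -, rfl⟩
        rw [hA]
        exact algebraMap_mem _ _
      exact eq_zero_of_mem_adjoin_insert_of_mem hfe hf he (fun _ => ih) ha' haI

end CanonicalCommutationRelations

namespace CCRRel

variable {W : Type*} [AddCommGroup W] [Module ℝ W] {Pb : W →ₗ[ℝ] W →ₗ[ℝ] ℝ}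
  {B : Type*} [Ring B] [Algebra ℂ B] [StarRing B] [StarModule ℂ B] {A : W → B}

/-- The generators of a solution of the CCR relations, as an `ℝ`-linear map. -/
def toLinearMap (hA : CCRRel Pb A) : W →ₗ[ℝ] B where
  toFun := A
  map_add' x y := by simpa using hA.1 1 1 x y
  map_smul' r x := by simpa using hA.1 r 0 x 0

lemma codRestrict (hA : CCRRel Pb A) (S : StarSubalgebra ℂ B) (hS : ∀ x, A x ∈ S) :
    CCRRel Pb fun x => (⟨A x, hS x⟩ : S) :=
  ⟨fun a b x y => Subtype.ext (hA.1 a b x y), fun x => Subtype.ext (hA.2.1 x),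
    fun x y => Subtype.ext (hA.2.2 x y)⟩

lemma star_range (hA : CCRRel Pb A) : star (Set.range A) = Set.range A := by
  rw [← Set.image_star, ← Set.range_comp]
  exact congrArg Set.range (funext hA.2.1)

end CCRRel

namespace IsCCRAlgebra

variable {W : Type*} [AddCommGroup W] [Module ℝ W] {Pb : W →ₗ[ℝ] W →ₗ[ℝ] ℝ}
  {𝒜 : Type u} [Ring 𝒜] [Algebra ℂ 𝒜] [StarRing 𝒜] [StarModule ℂ 𝒜] {A : W → 𝒜}

/- The universal property retracts the algebra onto any star subalgebra containing the
generators. -/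
lemma starAlgebra_adjoin_range_eq_top (hA : IsCCRAlgebra Pb 𝒜 A) :
    StarAlgebra.adjoin ℂ (Set.range A) = ⊤ := by
  set S := StarAlgebra.adjoin ℂ (Set.range A)
  have hS (x : W) : A x ∈ S := StarAlgebra.subset_adjoin ℂ _ ⟨x, rfl⟩
  obtain ⟨r, hr, -⟩ := hA.2 S _ (hA.1.codRestrict S hS)
  have hid : S.subtype.comp r = StarAlgHom.id ℂ 𝒜 :=
    (hA.2 𝒜 A hA.1).unique (fun x => congrArg Subtype.val (hr x)) fun _ => rfl
  refine eq_top_iff.2 fun a _ => ?_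
  have hra : (r a : 𝒜) = a := DFunLike.congr_fun hid a
  exact hra ▸ (r a).2

lemma adjoin_range_eq_top (hA : IsCCRAlgebra Pb 𝒜 A) :
    Algebra.adjoin ℂ (Set.range A) = ⊤ := by
  have h := congrArg StarSubalgebra.toSubalgebra hA.starAlgebra_adjoin_range_eq_top
  rwa [StarAlgebra.adjoin_toSubalgebra, hA.1.star_range, Set.union_self,
    StarSubalgebra.top_toSubalgebra] at h

end IsCCRAlgebra

theorem stmt_12_general {k K W R : Type*} [Field k] [Field K] [CharZero K] [Algebra k K]
    [AddCommGroup W] [Module k W] [Ring R] [Algebra K R] [Module k R] [IsScalarTower k K R]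
    (ω : W →ₗ[k] W →ₗ[k] k) (hω : ω.SeparatingRight) (A : W →ₗ[k] R) {c : K} (hc : c ≠ 0)
    (hA : ∀ x y, ⁅A x, A y⁆ = algebraMap K R (c * algebraMap k K (ω x y)))
    (hgen : Algebra.adjoin K (Set.range A) = ⊤) (I : TwoSidedIdeal R) : I = ⊥ ∨ I = ⊤ := by
  refine or_iff_not_imp_right.2 fun hI => eq_bot_iff.2 fun a haI => ?_
  have ha : a ∈ Algebra.adjoin K (Set.range A) := hgen ▸ Algebra.mem_top
  obtain ⟨s, hs⟩ := exists_finset_mem_adjoin_image ha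
  exact eq_zero_of_mem_adjoin_image_of_mem hω hc hA (I.one_mem_iff.not.2 hI) s hs haI

/-- If the Poisson bivector `Pb` of a Poisson vector space `(V, Pb, W, pair)` is weakly
non-degenerate on `W`, then the associated CCR algebra is simple: its only two-sided ideals
are `⊥ = {0}` and `⊤` (the whole algebra). -/
theorem stmt_12 {W : Type*} [AddCommGroup W] [Module ℝ W]
    {V : Type*} [AddCommGroup V] [Module ℝ V]
    (pair : W →ₗ[ℝ] V →ₗ[ℝ] ℝ)
    (hpair₁ : ∀ x : W, (∀ y : V, pair x y = 0) → x = 0)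
    (hpair₂ : ∀ y : V, (∀ x : W, pair x y = 0) → y = 0)
    (Pb : W →ₗ[ℝ] W →ₗ[ℝ] ℝ)
    (hanti : ∀ x y : W, Pb x y = - Pb y x)
    (hnd : ∀ y : W, (∀ x : W, Pb x y = 0) → y = 0)
    {𝒜 : Type u} [Ring 𝒜] [Algebra ℂ 𝒜] [StarRing 𝒜] [StarModule ℂ 𝒜]
    (A : W → 𝒜) (hCCR : IsCCRAlgebra Pb 𝒜 A) :
    ∀ I : TwoSidedIdeal 𝒜, I = ⊥ ∨ I = ⊤ :=
  stmt_12_general Pb hnd hCCR.1.toLinearMap Complex.I_ne_zero hCCR.1.2.2 hCCR.adjoin_range_eq_top
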